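/- Let f(z) = z + exp(−z). The set Ŝ := {z : |Im f^n(z)| ≤ π for all n ≥ 0} is closed in ℂ and equals the closure of its own interior, i.e. Ŝ = closure(interior(Ŝ)). -/

import Mathlib

/-!
Write `U` for the interior of `Shat` and `K` for its closure. Since `Shat` is closed, `K ⊆ Shat`, and
the point is that every `z ∈ Shat` has distance `0` from `K`. This follows from an expansion argument.

* In the coordinate `exp z = 1 / w`, `w = exp (-z)`, the part of the strip where `‖f'‖ ≤ 1`, that is
  `‖1 - w‖ ≤ 1`, is the half-plane `re ≥ 1 / 2` (`petal`). By `exists_exp_f_re` the map `f` increases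
  `re (exp z)` there, so the petal is forward invariant and lies in `U`. Hence `‖f'‖ > 1` at
  every point of the strip outside `U`.
* `f` is open and pushes points just outside the strip away from it, so a point of the strip whose
  image lies in `K` lies itself in `K` (`mem_closure_of_f_mem`).
* If `‖f'‖ > l` off `U`, then `dist (z, K) ≤ dist (f z, K) / l` (`infDist_le_of_deriv`). Instead of
  lifting the segment from `f z` to a nearest point `q ∈ K`, one minimises
  `l * ‖u - z‖ + ‖f u - q‖` over `u` in the strip. At a minimiser outside `K` a small step in the
  direction `(q - f u) / f' u` would decrease this quantity, so the minimiser lies in `K`, at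
  distance at most `‖f z - q‖ / l` from `z`.
* With `l = 1` the distance to `K` is non-decreasing along orbits in `Shat`. With a uniform `l > 1`
  available in a left half-plane (`exists_expansion`) it grows by the factor `l` whenever the orbit
  visits `re ≤ 0`, and every orbit in `Shat` does so or enters `U` (`exists_iterate_re_le`). As the
  real axis lies in `U`, the distance is at most `π` on `Shat`; so it is at most `π / l ^ k` for
  all `k`, that is, zero.
-/

open Complex Filter Topology Set

noncomputable def f : ℂ → ℂ := fun z => z + Complex.exp (-z)

def Shat : Set ℂ := {z : ℂ | ∀ n : ℕ, |((f^[n]) z).im| ≤ Real.pi}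

/-! ### The map `f` -/

theorem f_im (z : ℂ) : (f z).im = z.im - Real.exp (-z.re) * Real.sin z.im := by
  simp [f, Complex.exp_im]; ring

theorem f_differentiable : Differentiable ℂ f := by
  unfold f; fun_prop

theorem f_hasDerivAt (z : ℂ) : HasDerivAt f (1 - Complex.exp (-z)) z := by
  have h : HasDerivAt f (1 + Complex.exp (-z) * -1) z :=
    (hasDerivAt_id z).add ((hasDerivAt_id z).neg.cexp)
  rwa [mul_neg_one, ← sub_eq_add_neg] at h

theorem f_isOpenMap {s : Set ℂ} (hs : IsOpen s) : IsOpen (f '' s) := by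
  have han : AnalyticOnNhd ℂ f univ :=
    f_differentiable.differentiableOn.analyticOnNhd isOpen_univ
  rcases han.is_constant_or_isOpen isPreconnected_univ with ⟨w, hw⟩ | h
  · have h0 := congrArg Complex.im (hw 0 (mem_univ _))
    have h1 := congrArg Complex.im (hw (Real.pi * I) (mem_univ _))
    simp only [f_im] at h0 h1
    simp at h0 h1
    exact absurd (h1.trans h0.symm) Real.pi_ne_zero
  · exact h s (subset_univ _) hs

/-! ### Backward invariance of the interior and of its closure -/

theorem Shat_isClosed : IsClosed Shat := by
  have : Shat = ⋂ n : ℕ, {z : ℂ | |((f^[n]) z).im| ≤ Real.pi} := by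
    ext z; simp [Shat]
  rw [this]
  refine isClosed_iInter fun n => isClosed_le ?_ continuous_const
  exact (Complex.continuous_im.comp (f_differentiable.continuous.iterate n)).abs

theorem abs_im_le_of_mem_Shat {z : ℂ} (hz : z ∈ Shat) : |z.im| ≤ Real.pi := hz 0

theorem mem_Shat_of_f_mem {z : ℂ} (h : |z.im| ≤ Real.pi) (hz : f z ∈ Shat) : z ∈ Shat := by
  intro n
  cases n with
  | zero => simpa using h
  | succ n => simpa [Function.iterate_succ_apply] using hz n

theorem isOpen_abs_im_lt (a : ℝ) : IsOpen {z : ℂ | |z.im| < a} :=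
  isOpen_lt Complex.continuous_im.abs continuous_const

theorem mem_interior_of_f_mem {z : ℂ} (h : |z.im| < Real.pi) (hz : f z ∈ interior Shat) :
    z ∈ interior Shat := by
  have ho : IsOpen ({z : ℂ | |z.im| < Real.pi} ∩ f ⁻¹' interior Shat) :=
    (isOpen_abs_im_lt _).inter (isOpen_interior.preimage f_differentiable.continuous)
  refine mem_interior.2 ⟨_, ?_, ho, ⟨h, hz⟩⟩
  rintro u ⟨hu, huU⟩
  exact mem_Shat_of_f_mem (le_of_lt hu) (interior_subset huU)

/-- Just outside the strip `f` moves points away from it, so a point whose image lies in the open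
strip already lies in the open strip. -/
theorem abs_im_lt_of_f {z : ℂ} (h : |z.im| < 2 * Real.pi) (hz : |(f z).im| < Real.pi) :
    |z.im| < Real.pi := by
  by_contra! hge
  rw [f_im] at hz
  have he := Real.exp_pos (-z.re)
  rw [abs_lt] at h hz
  rcases le_abs.1 hge with h1 | h1
  · have hs : Real.sin z.im ≤ 0 := by
      have := Real.sin_nonneg_of_nonneg_of_le_pi (x := z.im - Real.pi) (by linarith) (by linarith)
      rw [Real.sin_sub_pi] at this; linarith
    nlinarith
  · have hs : 0 ≤ Real.sin z.im := by
      have := Real.sin_nonneg_of_nonneg_of_le_pi (x := z.im + 2 * Real.pi)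
        (by linarith) (by linarith)
      rwa [Real.sin_add_two_pi] at this
    nlinarith

/-- The interior of `Shat` accumulates at every point of the closed strip whose image it
accumulates at, because `f` is open. -/
theorem mem_closure_of_f_mem {z : ℂ} (h : |z.im| ≤ Real.pi)
    (hz : f z ∈ closure (interior Shat)) : z ∈ closure (interior Shat) := by
  rw [mem_closure_iff]
  intro o ho hzo
  have ho' : IsOpen (o ∩ {z : ℂ | |z.im| < 2 * Real.pi}) := ho.inter (isOpen_abs_im_lt _)
  have hlt : |z.im| < 2 * Real.pi := by linarith [Real.pi_pos]
  obtain ⟨_, ⟨u, ⟨huo, hu2⟩, rfl⟩, hU⟩ :=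
    mem_closure_iff.1 hz _ (f_isOpenMap ho') ⟨z, ⟨hzo, hlt⟩, rfl⟩
  refine ⟨u, huo, ?_⟩
  -- By openness of the interior, `f u` lies in the open strip, not merely in the closed one.
  have hopen : |(f u).im| < Real.pi := by
    have hsub : interior Shat ⊆ interior (Complex.im ⁻¹' Icc (-Real.pi) Real.pi) :=
      interior_mono fun x hx => abs_le.1 (abs_im_le_of_mem_Shat hx)
    have := hsub hU
    rw [Complex.interior_preimage_im, interior_Icc] at this
    exact abs_lt.2 this
  exact mem_interior_of_f_mem (abs_im_lt_of_f hu2 hopen) hU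

/-! ### The petal -/

/-- In the coordinate `exp z = 1 / w`, with `w = exp (-z)`, the map `f` is `1 / w ↦ exp w / w`, which
is `1 / w` plus the mean of `exp (t * w)` over `t ∈ [0, 1]`. -/
theorem exists_exp_f_re (z : ℂ) : ∃ c ∈ Ioo (0 : ℝ) 1,
    (Complex.exp (f z)).re = (Complex.exp z).re +
      Real.exp (c * (Complex.exp (-z)).re) * Real.cos (c * (Complex.exp (-z)).im) := by
  set w := Complex.exp (-z) with hw
  have hd : ∀ t : ℝ, HasDerivAt (fun t : ℝ => (Complex.exp z * Complex.exp (t * w)).re)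
      (Complex.exp (t * w)).re t := by
    intro t
    have h1 : HasDerivAt (fun t : ℂ => Complex.exp z * Complex.exp (t * w))
        (Complex.exp (t * w)) (t : ℂ) := by
      have h : HasDerivAt (fun t : ℂ => Complex.exp z * Complex.exp (t * w))
          (Complex.exp z * (Complex.exp (t * w) * (1 * w))) (t : ℂ) :=
        (((hasDerivAt_id (t : ℂ)).mul_const w).cexp).const_mul (Complex.exp z)
      have h2 : Complex.exp z * w = 1 := by rw [hw, ← Complex.exp_add]; simp
      have h3 : Complex.exp z * (Complex.exp (t * w) * (1 * w)) = Complex.exp (t * w) := by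
        linear_combination Complex.exp (t * w) * h2
      rwa [h3] at h
    exact h1.real_of_complex
  obtain ⟨c, hc, hc'⟩ := exists_hasDerivAt_eq_slope _ _ (zero_lt_one' ℝ)
    (fun t _ => (hd t).continuousAt.continuousWithinAt) (fun t _ => hd t)
  refine ⟨c, hc, ?_⟩
  have hf : Complex.exp (f z) = Complex.exp z * Complex.exp w := by
    rw [← Complex.exp_add, hw, f]
  rw [hf]
  rw [Complex.exp_re] at hc'
  simp only [Complex.ofReal_one, one_mul, Complex.ofReal_zero, zero_mul, Complex.exp_zero, mul_one,
    sub_zero, div_one, Complex.re_ofReal_mul, Complex.im_ofReal_mul] at hc'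
  linarith

theorem normSq_deriv (z : ℂ) : ‖1 - Complex.exp (-z)‖ ^ 2 =
    1 + Real.exp (-z.re) ^ 2 * (1 - 2 * (Complex.exp z).re) := by
  rw [← Complex.normSq_eq_norm_sq, Complex.normSq_apply]
  have h : Real.exp (-z.re) * Real.exp z.re = 1 := by rw [← Real.exp_add]; simp
  simp only [Complex.sub_re, Complex.sub_im, Complex.one_re, Complex.one_im, Complex.exp_re,
    Complex.exp_im, Complex.neg_re, Complex.neg_im, Real.cos_neg, Real.sin_neg]
  linear_combination (Real.exp (-z.re)) ^ 2 * Real.sin_sq_add_cos_sq z.im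
    + 2 * Real.exp (-z.re) * Real.cos z.im * h

theorem one_lt_norm_deriv {z : ℂ} (h : (Complex.exp z).re < 1 / 2) :
    1 < ‖1 - Complex.exp (-z)‖ := by
  have h1 := normSq_deriv z
  have h2 : 0 < Real.exp (-z.re) ^ 2 * (1 - 2 * (Complex.exp z).re) :=
    mul_pos (by positivity) (by linarith)
  nlinarith [norm_nonneg (1 - Complex.exp (-z))]

theorem norm_deriv_le_one {z : ℂ} (h : 1 / 2 ≤ (Complex.exp z).re) :
    ‖1 - Complex.exp (-z)‖ ≤ 1 := by
  have h1 := normSq_deriv z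
  have h2 : 0 ≤ Real.exp (-z.re) ^ 2 * (2 * (Complex.exp z).re - 1) :=
    mul_nonneg (by positivity) (by linarith)
  nlinarith [norm_nonneg (1 - Complex.exp (-z))]

/-- The closed petal, on which `‖deriv f‖ ≤ 1`: in the coordinate `exp z` it is the half-plane
`1 / 2 ≤ re`. -/
def petal : Set ℂ := {z | |z.im| ≤ Real.pi ∧ 1 / 2 ≤ (Complex.exp z).re}

theorem abs_im_lt_of_mem_petal {z : ℂ} (h : z ∈ petal) : |z.im| < Real.pi / 2 := by
  by_contra! hge
  have h2 := h.2
  rw [Complex.exp_re, ← Real.cos_abs] at h2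
  have := Real.cos_nonpos_of_pi_div_two_le_of_le hge (by linarith [h.1, Real.pi_pos])
  nlinarith [Real.exp_pos z.re]

theorem f_mem_petal {z : ℂ} (h : z ∈ petal) :
    |(f z).im| < Real.pi ∧ 1 / 2 < (Complex.exp (f z)).re := by
  have hw : |(Complex.exp (-z)).im| ≤ 1 := by
    have := (Complex.abs_im_le_norm _).trans (norm_deriv_le_one h.2)
    simpa using this
  constructor
  · have h1 : (f z).im = z.im + (Complex.exp (-z)).im := by simp [f]
    have := abs_add_le z.im (Complex.exp (-z)).im
    rw [h1]
    linarith [abs_im_lt_of_mem_petal h, Real.pi_gt_three]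
  · obtain ⟨c, hc, hc'⟩ := exists_exp_f_re z
    rw [hc']
    have hcos : 0 < Real.cos (c * (Complex.exp (-z)).im) := by
      have : |c * (Complex.exp (-z)).im| ≤ 1 := by
        rw [abs_mul, abs_of_pos hc.1]
        nlinarith [hc.1, hc.2, abs_nonneg (Complex.exp (-z)).im]
      rw [abs_le] at this
      apply Real.cos_pos_of_mem_Ioo
      constructor <;> linarith [Real.pi_gt_three]
    have := mul_pos (Real.exp_pos (c * (Complex.exp (-z)).re)) hcos
    linarith [h.2]

theorem petal_subset_Shat : petal ⊆ Shat := by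
  intro z hz n
  have : f^[n] z ∈ petal := by
    induction n with
    | zero => simpa using hz
    | succ n ih =>
      rw [Function.iterate_succ_apply']
      exact ⟨(f_mem_petal ih).1.le, (f_mem_petal ih).2.le⟩
  exact this.1

theorem petal_subset_interior : petal ⊆ interior Shat := by
  intro z hz
  refine mem_interior_of_f_mem (by linarith [abs_im_lt_of_mem_petal hz, Real.pi_pos]) ?_
  have ho : IsOpen ({z : ℂ | |z.im| < Real.pi} ∩ {z : ℂ | 1 / 2 < (Complex.exp z).re}) :=
    (isOpen_abs_im_lt _).inter
      (isOpen_lt continuous_const (Complex.continuous_re.comp Complex.continuous_exp))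
  refine mem_interior.2 ⟨_, ?_, ho, f_mem_petal hz⟩
  rintro u ⟨hu, hu'⟩
  exact petal_subset_Shat ⟨le_of_lt hu, le_of_lt hu'⟩

theorem one_lt_norm_deriv_of_notMem {z : ℂ} (h : |z.im| ≤ Real.pi) (hz : z ∉ interior Shat) :
    1 < ‖1 - Complex.exp (-z)‖ := by
  apply one_lt_norm_deriv
  by_contra! hge
  exact hz (petal_subset_interior ⟨h, hge⟩)

theorem ofReal_mem_interior (x : ℝ) : (x : ℂ) ∈ interior Shat := by
  refine mem_interior_of_f_mem (by simpa using Real.pi_pos) (petal_subset_interior ?_)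
  have hf : f (x : ℂ) = ((x + Real.exp (-x) : ℝ) : ℂ) := by simp [f]
  rw [hf]
  refine ⟨by rw [Complex.ofReal_im, abs_zero]; exact Real.pi_pos.le, ?_⟩
  rw [← Complex.ofReal_exp, Complex.ofReal_re]
  have h1 := Real.add_one_le_exp (-x)
  have h2 := Real.add_one_le_exp (x + Real.exp (-x))
  linarith

theorem infDist_le_pi {z : ℂ} (h : |z.im| ≤ Real.pi) :
    Metric.infDist z (closure (interior Shat)) ≤ Real.pi := by
  refine (Metric.infDist_le_dist_of_mem (subset_closure (ofReal_mem_interior z.re))).trans ?_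
  have : z - (z.re : ℂ) = z.im * I := by
    apply Complex.ext <;> simp
  rw [dist_eq_norm, this]
  simpa using h

/-! ### Contraction of the distance under pulling back -/

/-- One step of steepest descent: moving `u` in the direction `(q - f u) / f' u` decreases the
functional `l * ‖u - z‖ + ‖f u - q‖` as soon as `‖f' u‖ > l`, and does not leave the closed strip
since `f' > 0` on its boundary lines, which are invariant. -/
theorem exists_descent {u z q : ℂ} {l R : ℝ} (hl : 0 < l) (hu : |u.im| ≤ Real.pi)
    (hq : |q.im| ≤ Real.pi) (hne : f u ≠ q) (hd : l < ‖1 - Complex.exp (-u)‖)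
    (hR : ‖u - z‖ < R) :
    ∃ v : ℂ, |v.im| ≤ Real.pi ∧ ‖v - z‖ < R ∧
      l * ‖v - z‖ + ‖f v - q‖ < l * ‖u - z‖ + ‖f u - q‖ := by
  set d := 1 - Complex.exp (-u) with hdef
  have hd0 : 0 < ‖d‖ := hl.trans hd
  have hdne : d ≠ 0 := norm_pos_iff.1 hd0
  set e := (q - f u) / d with he
  have hN : 0 < ‖q - f u‖ := norm_pos_iff.2 (sub_ne_zero.2 hne.symm)
  have hen : ‖e‖ * ‖d‖ = ‖q - f u‖ := by rw [he, norm_div]; field_simp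
  have he0 : 0 < ‖e‖ := pos_of_mul_pos_left (hen ▸ hN) hd0.le
  have hlin : Tendsto (fun t : ℝ => u + t * e) (𝓝[>] 0) (𝓝 u) := by
    have : Continuous fun t : ℝ => u + t * e := by fun_prop
    have h := this.tendsto 0
    simp only [Complex.ofReal_zero, zero_mul, add_zero] at h
    exact h.mono_left nhdsWithin_le_nhds
  have hε : 0 < (‖d‖ - l) / 2 := by linarith
  -- First-order Taylor bound for `f` at `u`, with an error absorbed by the gap `‖d‖ - l`.
  have hT : ∀ᶠ v in 𝓝 u, ‖f v - f u - (v - u) * d‖ ≤ (‖d‖ - l) / 2 * ‖v - u‖ := by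
    have h := (f_hasDerivAt u).isLittleO.def hε
    simpa [smul_eq_mul] using h
  have hball : ∀ᶠ v in 𝓝 u, ‖v - z‖ < R :=
    (by fun_prop : Continuous fun v : ℂ => ‖v - z‖).continuousAt.eventually_lt_const hR
  have hstrip : ∀ᶠ t : ℝ in 𝓝[>] 0, |(u + t * e).im| ≤ Real.pi := by
    rcases hu.lt_or_eq with hlt | heq
    · filter_upwards [hlin.eventually ((isOpen_abs_im_lt Real.pi).mem_nhds hlt)] with t ht
      exact le_of_lt ht
    · have hsin : Real.sin u.im = 0 := by
        rcases eq_or_eq_neg_of_abs_eq heq with h | h <;> simp [h]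
      have hcos : Real.cos u.im = -1 := by
        rcases eq_or_eq_neg_of_abs_eq heq with h | h <;> simp [h]
      have hdr : d = ((1 + Real.exp (-u.re) : ℝ) : ℂ) := by
        apply Complex.ext
        · simp [hdef, Complex.exp_re, hcos]
        · simp [hdef, Complex.exp_im, hsin]
      have hp : 0 < 1 + Real.exp (-u.re) := by positivity
      have heim : e.im = (q.im - u.im) / (1 + Real.exp (-u.re)) := by
        rw [he, hdr, Complex.div_ofReal_im, Complex.sub_im, f_im, hsin]; simp
      have hle : ∀ᶠ t : ℝ in 𝓝[>] 0, t < 1 + Real.exp (-u.re) :=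
        nhdsWithin_le_nhds (Iio_mem_nhds hp)
      filter_upwards [hle, self_mem_nhdsWithin] with t ht ht0
      have ht0' : 0 < t := ht0
      -- The new imaginary part is a convex combination of those of `u` and `q`.
      set s := t / (1 + Real.exp (-u.re)) with hs
      have hs0 : 0 ≤ s := by positivity
      have hs1 : s ≤ 1 := (div_le_one hp).2 ht.le
      have : (u + t * e).im = (1 - s) * u.im + s * q.im := by
        rw [Complex.add_im, Complex.im_ofReal_mul, heim, hs]; ring
      rw [this]
      rw [abs_le] at hu hq ⊢
      constructor <;> nlinarith
  have ht1 : ∀ᶠ t : ℝ in 𝓝[>] 0, t < 1 := nhdsWithin_le_nhds (Iio_mem_nhds one_pos)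
  obtain ⟨t, hTt, hbt, hst, htl, ht0⟩ := ((hlin.eventually hT).and ((hlin.eventually hball).and
    (hstrip.and (ht1.and self_mem_nhdsWithin)))).exists
  have ht0' : 0 < t := ht0
  refine ⟨u + t * e, hst, hbt, ?_⟩
  have hed : e * d = q - f u := by rw [he]; field_simp
  have hte : ‖(t : ℂ) * e‖ = t * ‖e‖ := by simp [abs_of_pos ht0']
  have h1 : ‖u + t * e - z‖ ≤ ‖u - z‖ + t * ‖e‖ := by
    rw [← hte]
    calc _ = ‖(u - z) + t * e‖ := by ring_nf
      _ ≤ _ := norm_add_le _ _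
  have h2 : ‖f (u + t * e) - q‖ ≤ (‖d‖ - l) / 2 * (t * ‖e‖) + (1 - t) * ‖q - f u‖ := by
    rw [add_sub_cancel_left, hte] at hTt
    have h3 : ‖((1 - t : ℝ) : ℂ) * (f u - q)‖ = (1 - t) * ‖q - f u‖ := by
      rw [norm_mul, Complex.norm_real, Real.norm_of_nonneg (by linarith), norm_sub_rev]
    calc ‖f (u + t * e) - q‖
        = ‖(f (u + t * e) - f u - t * e * d) + ((1 - t : ℝ) : ℂ) * (f u - q)‖ := by
          congr 1; push_cast; linear_combination (t : ℂ) * hed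
      _ ≤ _ := norm_add_le _ _
      _ ≤ _ := by rw [h3]; linarith
  have h4 : 0 < t * ‖e‖ * (‖d‖ - l) := by
    have : 0 < ‖d‖ - l := by linarith
    positivity
  rw [norm_sub_rev (f u) q]
  nlinarith

/-- The distance to the closure of the interior contracts under pulling back by `f`, at a rate
given by the derivative off the interior. A minimiser over the strip of
`u ↦ l * ‖u - z‖ + ‖f u - q‖` lies in that closure, for otherwise `exists_descent` applies to it. -/
theorem infDist_le_of_deriv {z q : ℂ} {l : ℝ} (hl : 0 < l) (hz : |z.im| ≤ Real.pi)
    (hq : q ∈ closure (interior Shat))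
    (hd : ∀ u : ℂ, |u.im| ≤ Real.pi → u ∉ interior Shat → ‖u - z‖ ≤ ‖f z - q‖ / l →
      l < ‖1 - Complex.exp (-u)‖) :
    Metric.infDist z (closure (interior Shat)) ≤ ‖f z - q‖ / l := by
  have hqim : |q.im| ≤ Real.pi :=
    abs_im_le_of_mem_Shat (Shat_isClosed.closure_subset_iff.2 interior_subset hq)
  set R := ‖f z - q‖ / l + 1 with hRdef
  have hR0 : 0 ≤ ‖f z - q‖ / l := by positivity
  have hC : IsCompact (Metric.closedBall z R ∩ {u : ℂ | |u.im| ≤ Real.pi}) :=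
    (isCompact_closedBall z R).inter_right
      (isClosed_le Complex.continuous_im.abs continuous_const)
  have hcont : Continuous fun u : ℂ => l * ‖u - z‖ + ‖f u - q‖ := by
    have := f_differentiable.continuous
    fun_prop
  obtain ⟨u, ⟨-, hus⟩, hmin⟩ := hC.exists_isMinOn
    ⟨z, Metric.mem_closedBall_self (by linarith), hz⟩ hcont.continuousOn
  have hus' : |u.im| ≤ Real.pi := hus
  have hle : l * ‖u - z‖ + ‖f u - q‖ ≤ ‖f z - q‖ := by
    have := isMinOn_iff.1 hmin z ⟨Metric.mem_closedBall_self (by linarith), hz⟩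
    simpa using this
  have hdist : ‖u - z‖ ≤ ‖f z - q‖ / l := by
    rw [le_div_iff₀ hl]; nlinarith [norm_nonneg (f u - q)]
  have huK : u ∈ closure (interior Shat) := by
    by_contra hnot
    have hne : f u ≠ q := fun h => hnot (mem_closure_of_f_mem hus' (h ▸ hq))
    obtain ⟨v, hv, hvR, hlt⟩ := exists_descent hl hus' hqim hne
      (hd u hus' (fun h => hnot (subset_closure h)) hdist)
      (show ‖u - z‖ < R by linarith)
    have := isMinOn_iff.1 hmin v
      ⟨by rw [Metric.mem_closedBall, dist_eq_norm]; exact hvR.le, hv⟩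
    linarith
  refine (Metric.infDist_le_dist_of_mem huK).trans ?_
  rwa [dist_comm, dist_eq_norm]

theorem exists_infDist_eq_norm (z : ℂ) : ∃ q ∈ closure (interior Shat),
    Metric.infDist z (closure (interior Shat)) = ‖z - q‖ := by
  obtain ⟨q, hq, h⟩ := isClosed_closure.exists_infDist_eq_dist
    ⟨_, subset_closure (ofReal_mem_interior 0)⟩ z
  exact ⟨q, hq, by rw [h, dist_eq_norm]⟩

theorem infDist_le_infDist_f {z : ℂ} (hz : |z.im| ≤ Real.pi) :
    Metric.infDist z (closure (interior Shat)) ≤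
      Metric.infDist (f z) (closure (interior Shat)) := by
  obtain ⟨q, hq, h⟩ := exists_infDist_eq_norm (f z)
  rw [h]
  simpa using infDist_le_of_deriv one_pos hz hq
    (fun u hu hu' _ => one_lt_norm_deriv_of_notMem hu hu')

theorem infDist_le_infDist_iterate {z : ℂ} (hz : z ∈ Shat) (n : ℕ) :
    Metric.infDist z (closure (interior Shat)) ≤
      Metric.infDist (f^[n] z) (closure (interior Shat)) := by
  induction n with
  | zero => simp
  | succ n ih =>
    rw [Function.iterate_succ_apply']
    exact ih.trans (infDist_le_infDist_f (hz n))

/-! ### Uniform expansion along orbits -/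

/-- To the left of `re = 4` the derivative off the interior is bounded away from `1` in modulus:
by compactness for `-2 ≤ re`, and because `exp (-u)` is large otherwise. -/
theorem exists_expansion : ∃ l : ℝ, 1 < l ∧ ∀ u : ℂ, |u.im| ≤ Real.pi → u ∉ interior Shat →
    u.re ≤ 4 → l < ‖1 - Complex.exp (-u)‖ := by
  have hC : IsCompact ((Icc (-2 : ℝ) 4 ×ℂ Icc (-Real.pi) Real.pi) ∩ (interior Shat)ᶜ) :=
    (isCompact_Icc.reProdIm isCompact_Icc).inter_right isOpen_interior.isClosed_compl
  have hcont : Continuous fun u : ℂ => ‖1 - Complex.exp (-u)‖ := by fun_prop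
  obtain ⟨m, hm, hmle⟩ : ∃ m : ℝ, 1 < m ∧
      ∀ u ∈ (Icc (-2 : ℝ) 4 ×ℂ Icc (-Real.pi) Real.pi) ∩ (interior Shat)ᶜ,
        m ≤ ‖1 - Complex.exp (-u)‖ := by
    rcases Set.eq_empty_or_nonempty
      ((Icc (-2 : ℝ) 4 ×ℂ Icc (-Real.pi) Real.pi) ∩ (interior Shat)ᶜ) with h | h
    · exact ⟨2, one_lt_two, by simp [h]⟩
    · obtain ⟨v, hv, hmin⟩ := hC.exists_isMinOn h hcont.continuousOn
      exact ⟨_, one_lt_norm_deriv_of_notMem (abs_le.2 hv.1.2) hv.2, isMinOn_iff.1 hmin⟩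
  have h1 : 1 < min m 2 := lt_min hm one_lt_two
  refine ⟨(1 + min m 2) / 2, by linarith, fun u hu hu' h4 => ?_⟩
  refine lt_of_lt_of_le (show (1 + min m 2) / 2 < min m 2 by linarith) ?_
  rcases le_total (-2) u.re with h | h
  · exact (min_le_left _ _).trans (hmle u ⟨⟨⟨h, h4⟩, abs_le.1 hu⟩, hu'⟩)
  · refine (min_le_right _ _).trans ?_
    have h2 : ‖Complex.exp (-u)‖ = Real.exp (-u.re) := by simp [Complex.norm_exp]
    have h3 := norm_sub_norm_le (Complex.exp (-u)) 1
    rw [norm_sub_rev, h2, norm_one] at h3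
    have := Real.add_one_le_exp (-u.re)
    linarith

/-- Orbits in `Shat` cannot stay in the right half-plane without entering the petal: there
`re (exp z)` grows by a fixed amount at each step. -/
theorem exists_iterate_re_le {z : ℂ} (hz : z ∈ Shat) :
    ∃ n : ℕ, f^[n] z ∈ interior Shat ∨ (f^[n] z).re ≤ 0 := by
  by_contra! hcon
  have hlt : ∀ n, (Complex.exp (f^[n] z)).re < 1 / 2 := fun n => by
    by_contra! hge
    exact (hcon n).1 (petal_subset_interior ⟨hz n, hge⟩)
  set δ := Real.exp (-1) * Real.cos 1 with hδ
  have hδ0 : 0 < δ := mul_pos (Real.exp_pos _) Real.cos_one_pos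
  have hstep : ∀ u : ℂ, 0 < u.re → (Complex.exp u).re + δ ≤ (Complex.exp (f u)).re := by
    intro u hu
    obtain ⟨c, hc, hc'⟩ := exists_exp_f_re u
    have hw : ‖Complex.exp (-u)‖ ≤ 1 := by
      simpa [Complex.norm_exp] using hu.le
    have hre := (Complex.abs_re_le_norm (Complex.exp (-u))).trans hw
    have him := (Complex.abs_im_le_norm (Complex.exp (-u))).trans hw
    rw [hc', hδ]
    have h1 : Real.exp (-1) ≤ Real.exp (c * (Complex.exp (-u)).re) := by
      apply Real.exp_le_exp.2
      nlinarith [hc.1, hc.2, (abs_le.1 hre).1]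
    have h2 : Real.cos 1 ≤ Real.cos (c * (Complex.exp (-u)).im) := by
      rw [← Real.cos_abs (c * _)]
      apply Real.cos_le_cos_of_nonneg_of_le_pi (abs_nonneg _) (by linarith [Real.pi_gt_three])
      rw [abs_mul, abs_of_pos hc.1]
      nlinarith [hc.1, hc.2, abs_nonneg (Complex.exp (-u)).im]
    have := mul_le_mul h1 h2 Real.cos_one_pos.le (Real.exp_pos _).le
    linarith
  have hgrow : ∀ n : ℕ, (Complex.exp z).re + n * δ ≤ (Complex.exp (f^[n] z)).re := by
    intro n
    induction n with
    | zero => simp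
    | succ n ih =>
      rw [Function.iterate_succ_apply']
      have := hstep _ (hcon n).2
      push_cast
      linarith
  obtain ⟨n, hn⟩ := exists_nat_gt ((1 / 2 - (Complex.exp z).re) / δ)
  rw [div_lt_iff₀ hδ0] at hn
  linarith [hgrow n, hlt n]

theorem infDist_le_pow {l : ℝ} (hl : 1 < l) (h : ∀ u : ℂ, |u.im| ≤ Real.pi → u ∉ interior Shat →
    u.re ≤ 4 → l < ‖1 - Complex.exp (-u)‖) (k : ℕ) :
    ∀ z ∈ Shat, Metric.infDist z (closure (interior Shat)) ≤ Real.pi / l ^ k := by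
  have hl0 : 0 < l := by linarith
  induction k with
  | zero => intro z hz; simpa using infDist_le_pi (abs_im_le_of_mem_Shat hz)
  | succ k ih =>
    intro z hz
    obtain ⟨n, hn⟩ := exists_iterate_re_le hz
    refine (infDist_le_infDist_iterate hz n).trans ?_
    rcases hn with hn | hn
    · rw [Metric.infDist_zero_of_mem (subset_closure hn)]
      have := Real.pi_pos
      positivity
    · obtain ⟨q, hq, hqe⟩ := exists_infDist_eq_norm (f (f^[n] z))
      have hfn : f (f^[n] z) ∈ Shat := by
        rw [← Function.iterate_succ_apply' f]
        intro m
        rw [← Function.iterate_add_apply]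
        exact hz _
      have hk := ih _ hfn
      have hpi := infDist_le_pi (abs_im_le_of_mem_Shat hfn)
      rw [hqe] at hk hpi
      calc _ ≤ ‖f (f^[n] z) - q‖ / l := by
            refine infDist_le_of_deriv hl0 (hz n) hq fun u hu hu' hdist => h u hu hu' ?_
            have h1 : ‖f (f^[n] z) - q‖ / l ≤ ‖f (f^[n] z) - q‖ :=
              div_le_self (norm_nonneg _) hl.le
            have h2 := (le_abs_self _).trans (Complex.abs_re_le_norm (u - f^[n] z))
            rw [Complex.sub_re] at h2
            linarith [Real.pi_lt_four]
        _ ≤ Real.pi / l ^ k / l := by gcongr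
        _ = Real.pi / l ^ (k + 1) := by rw [div_div, pow_succ]

/-- Ŝ is closed and equals the closure of its interior. -/
theorem Shat_isClosed_and_eq_closure_interior :
    IsClosed Shat ∧ Shat = closure (interior Shat) := by
  refine ⟨Shat_isClosed, Subset.antisymm (fun z hz => ?_)
    (Shat_isClosed.closure_subset_iff.2 interior_subset)⟩
  obtain ⟨l, hl, h⟩ := exists_expansion
  have hlim : Tendsto (fun k : ℕ => Real.pi / l ^ k) atTop (𝓝 0) :=
    (tendsto_pow_atTop_atTop_of_one_lt hl).const_div_atTop _
  have h0 : Metric.infDist z (closure (interior Shat)) ≤ 0 :=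
    ge_of_tendsto' hlim fun k => infDist_le_pow hl h k z hz
  exact (isClosed_closure.mem_iff_infDist_zero
    ⟨_, subset_closure (ofReal_mem_interior 0)⟩).2 (le_antisymm h0 Metric.infDist_nonneg)
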